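/- Let g : ℝ → ℝ be given on [0,1] by a convergent power series g(z) = ∑_{i=0}^∞ a_i z^i with a_i ≥ 0 for all i, with g(0) = 0 and g'(0) = a where 0 < a < 1, and suppose g(z) < z for all z ∈ (0,d]. Let b > 1, let 0 < d < 1, and define f : [0,1] → ℝ by f(z) = g(z) for z ∈ [0,d] and f(z) = 1 - b·(1-z) for z ∈ (d,1]; assume f is strictly monotonically increasing on [0,1]. Then for every z ∈ (d,1) the limit ℓ(z) := lim_{L→∞} f^[L](z)/a^L exists and is nonnegative; moreover, with β = -log a / log b (> 0), the function z ↦ (1-z)^β · ℓ(z) is bounded above on (d,1), and there exist ε > 0 and δ > 0 such that (1-z)^β · ℓ(z) ≥ δ for all z ∈ (1-ε,1). -/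

import Mathlib

open Filter Set

section PowerSeries

variable {co : ℕ → ℝ} {g : ℝ → ℝ}

/-- A power series with nonnegative coefficients dominates its linear term. -/
lemma linear_term_le_of_hasSum (hco : ∀ i, 0 ≤ co i) {z : ℝ} (hz : 0 ≤ z)
    (hg : HasSum (fun i => co i * z ^ i) (g z)) : co 1 * z ≤ g z := by
  simpa using le_hasSum hg 1 fun i _ => mul_nonneg (hco i) (pow_nonneg hz i)

/-- A power series with nonnegative coefficients and no constant term is at most its linear term
plus a quadratic error on the unit interval. -/
lemma le_linear_add_quadratic_of_hasSum (hco : ∀ i, 0 ≤ co i) (hco0 : co 0 = 0)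
    (hg : ∀ z ∈ Icc (0 : ℝ) 1, HasSum (fun i => co i * z ^ i) (g z)) {z : ℝ}
    (hz : z ∈ Icc (0 : ℝ) 1) : g z ≤ co 1 * z + (g 1 - co 1) * z ^ 2 := by
  have h1 : HasSum (fun i => co i * z ^ 2) (g 1 * z ^ 2) := by
    simpa using (hg 1 (by simp)).mul_right (z ^ 2)
  have h2 := h1.add (hasSum_ite_eq 1 (co 1 * (z - z ^ 2)))
  refine (hasSum_le (fun i => ?_) (hg z hz) h2).trans (by linarith)
  match i with
  | 0 => simp [hco0]
  | 1 => simp; linarith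
  | i + 2 =>
    have := mul_le_mul_of_nonneg_left
      (pow_le_pow_of_le_one hz.1 hz.2 (show 2 ≤ i + 2 by omega)) (hco (i + 2))
    simpa using this

/-- A power series with nonnegative coefficients and no constant term lies below its chords
through the origin. -/
lemma le_chord_of_hasSum (hco : ∀ i, 0 ≤ co i) (hco0 : co 0 = 0)
    {d z : ℝ} (hd : 0 < d) (hgd : HasSum (fun i => co i * d ^ i) (g d))
    (hgz : HasSum (fun i => co i * z ^ i) (g z)) (hz : z ∈ Icc 0 d) :
    g z ≤ g d / d * z := by
  have h1 := hgd.mul_right (z / d)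
  refine (hasSum_le (fun i => ?_) hgz h1).trans_eq (by ring)
  match i with
  | 0 => simp [hco0]
  | i + 1 =>
    have h := mul_le_mul_of_nonneg_left
      (mul_le_mul_of_nonneg_right (pow_le_pow_left₀ hz.1 hz.2 i) hz.1) (hco (i + 1))
    calc co (i + 1) * z ^ (i + 1) = co (i + 1) * (z ^ i * z) := by ring
      _ ≤ co (i + 1) * (d ^ i * z) := h
      _ = co (i + 1) * d ^ (i + 1) * (z / d) := by rw [pow_succ]; field_simp

end PowerSeries

/-- Koenigs linearization on the real line: if `a x ≤ f x ≤ a x + K x ^ 2` and `f` contracts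
towards `0`, then the normalized iterates `f^[L] x / a ^ L` converge, to a limit comparable
with `x`. -/
lemma exists_tendsto_iterate_div_pow {f : ℝ → ℝ} {a K q d : ℝ} (ha : 0 < a) (hK : 0 ≤ K)
    (hq0 : 0 ≤ q) (hq1 : q < 1) (hd : d ≤ 1)
    (hlow : ∀ x ∈ Icc 0 d, a * x ≤ f x) (hquad : ∀ x ∈ Icc 0 d, f x ≤ a * x + K * x ^ 2)
    (hcontr : ∀ x ∈ Icc 0 d, f x ≤ q * x) {x : ℝ} (hx : x ∈ Icc 0 d) :
    ∃ l, Tendsto (fun L => f^[L] x / a ^ L) atTop (nhds l) ∧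
      x ≤ l ∧ l ≤ x * Real.exp (K / a * (1 - q)⁻¹) := by
  have horbit : ∀ L, f^[L] x ∈ Icc 0 d ∧ f^[L] x ≤ q ^ L := by
    intro L
    induction L with
    | zero => exact ⟨by simpa using hx, by simpa using hx.2.trans hd⟩
    | succ L ih =>
      obtain ⟨hmem, hle⟩ := ih
      have h1 := hcontr _ hmem
      rw [Function.iterate_succ_apply']
      refine ⟨⟨(mul_nonneg ha.le hmem.1).trans (hlow _ hmem), ?_⟩, ?_⟩
      · exact (h1.trans (mul_le_of_le_one_left hmem.1 hq1.le)).trans hmem.2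
      · rw [pow_succ']
        exact h1.trans (mul_le_mul_of_nonneg_left hle hq0)
  have hmono : Monotone fun L => f^[L] x / a ^ L := by
    refine monotone_nat_of_le_succ fun L => ?_
    rw [Function.iterate_succ_apply', div_le_div_iff₀ (by positivity) (by positivity), pow_succ]
    have := mul_le_mul_of_nonneg_right (hlow _ (horbit L).1) (pow_pos ha L).le
    linarith
  have hexp : ∀ L, f^[L] x / a ^ L ≤ x * Real.exp (K / a * ∑ j ∈ Finset.range L, q ^ j) := by
    intro L
    induction L with
    | zero => simp
    | succ L ih =>
      obtain ⟨hmem, hle⟩ := horbit L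
      rw [Function.iterate_succ_apply', Finset.sum_range_succ, mul_add, Real.exp_add, ← mul_assoc]
      have hfac : 1 + K / a * f^[L] x ≤ Real.exp (K / a * q ^ L) := by
        have h1 := Real.add_one_le_exp (K / a * q ^ L)
        have h2 := mul_le_mul_of_nonneg_left hle (show 0 ≤ K / a by positivity)
        linarith
      calc f (f^[L] x) / a ^ (L + 1)
          ≤ (a * f^[L] x + K * f^[L] x ^ 2) / a ^ (L + 1) := by gcongr; exact hquad _ hmem
        _ = f^[L] x / a ^ L * (1 + K / a * f^[L] x) := by rw [pow_succ a]; field_simp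
        _ ≤ _ := mul_le_mul ih hfac (by have := hmem.1; positivity)
              (mul_nonneg hx.1 (Real.exp_pos _).le)
  have hbound : ∀ L, f^[L] x / a ^ L ≤ x * Real.exp (K / a * (1 - q)⁻¹) := by
    intro L
    refine (hexp L).trans (mul_le_mul_of_nonneg_left (Real.exp_le_exp.2 ?_) hx.1)
    refine mul_le_mul_of_nonneg_left ?_ (by positivity)
    rw [← tsum_geometric_of_lt_one hq0 hq1]
    exact (summable_geometric_of_lt_one hq0 hq1).sum_le_tsum _ fun _ _ => by positivity
  have hlim := tendsto_atTop_ciSup hmono ⟨_, forall_mem_range.2 hbound⟩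
  exact ⟨_, hlim, by simpa using hmono.ge_of_tendsto hlim 0, le_of_tendsto' hlim hbound⟩

/-- An orbit starting in `(d, 1)` is pushed away from `1` by the factor `b` at each step until it
leaves `(d, 1)`. -/
lemma exists_iterate_escape {f : ℝ → ℝ} {b d : ℝ} (hb : 1 < b)
    (hf : ∀ z ∈ Ioc d 1, f z = 1 - b * (1 - z)) {z : ℝ} (hz : z ∈ Ioo d 1) :
    ∃ n, f^[n] z ∈ Ioc d 1 ∧ f^[n + 1] z ≤ d ∧ 1 - f^[n + 1] z = b ^ (n + 1) * (1 - z) := by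
  have hz1 : 0 < 1 - z := sub_pos.2 hz.2
  have hlin : ∀ n, (∀ j < n, d < f^[j] z) → 1 - f^[n] z = b ^ n * (1 - z) := by
    intro n
    induction n with
    | zero => simp
    | succ n ih =>
      intro h
      have h1 := ih fun j hj => h j (by omega)
      have h2 : f^[n] z ≤ 1 := by
        have : 0 ≤ b ^ n * (1 - z) := by positivity
        linarith
      rw [Function.iterate_succ_apply', hf _ ⟨h n (by omega), h2⟩, h1]
      ring
  have hex : ∃ n, f^[n] z ≤ d := by
    by_contra! h
    obtain ⟨n, hn⟩ := pow_unbounded_of_one_lt ((1 - d) / (1 - z)) hb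
    rw [div_lt_iff₀ hz1, ← hlin n fun j _ => h j] at hn
    linarith [h n]
  classical
  have hmin : ∀ j < Nat.find hex, d < f^[j] z := fun j hj => not_le.1 (Nat.find_min hex hj)
  have hspec := Nat.find_spec hex
  obtain ⟨n, hn⟩ : ∃ n, Nat.find hex = n + 1 := by
    refine Nat.exists_eq_succ_of_ne_zero fun h0 => ?_
    rw [h0] at hspec
    exact absurd hspec (not_le.2 hz.1)
  rw [hn] at hmin hspec
  refine ⟨n, ⟨hmin n (by omega), ?_⟩, hspec, hlin _ hmin⟩
  have h1 := hlin n fun j hj => hmin j (by omega)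
  have : 0 ≤ b ^ n * (1 - z) := by positivity
  linarith

lemma pow_mul_rpow_neg_log_div_log {a b : ℝ} (ha : 0 < a) (hb : 1 < b) {x : ℝ} (hx : 0 ≤ x)
    (n : ℕ) : (b ^ n * x) ^ (-Real.log a / Real.log b) =
      x ^ (-Real.log a / Real.log b) / a ^ n := by
  have hb0 : 0 < b := by linarith
  have hbase : b ^ (-Real.log a / Real.log b) = a⁻¹ := by
    rw [Real.rpow_def_of_pos hb0, mul_div_cancel₀ _ (Real.log_pos hb).ne', ← Real.log_inv,
      Real.exp_log (inv_pos.2 ha)]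
  rw [Real.mul_rpow (by positivity) hx, ← Real.rpow_natCast_mul hb0.le, mul_comm (n : ℝ),
    Real.rpow_mul_natCast hb0.le, hbase, inv_pow]
  ring

/-- Iterating a strictly increasing map `f` that equals a power series `g` (with nonnegative
coefficients, `g(0) = 0`, `g'(0) = a ∈ (0,1)`, `g(z) < z` on `(0,d]`) on `[0,d]` and equals
`1 - b(1-z)` on `(d,1]` (with `b > 1`), after normalizing by `a^L`, yields a function with a
singularity of order `-log_b a` at `z = 1`. -/
theorem piecewise_series_iteration_singularity
    (co : ℕ → ℝ) (g : ℝ → ℝ) (a b d : ℝ)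
    (hco : ∀ i, 0 ≤ co i)
    (hg : ∀ z ∈ Set.Icc (0 : ℝ) 1, HasSum (fun i => co i * z ^ i) (g z))
    (hco0 : co 0 = 0) (hco1 : co 1 = a) (ha : 0 < a) (ha1 : a < 1)
    (hglt : ∀ z ∈ Set.Ioc (0 : ℝ) d, g z < z)
    (hb : 1 < b) (hd0 : 0 < d) (hd1 : d < 1) (f : ℝ → ℝ)
    (hf1 : ∀ z ∈ Set.Icc (0 : ℝ) d, f z = g z)
    (hf2 : ∀ z ∈ Set.Ioc d 1, f z = 1 - b * (1 - z))
    (hmono : StrictMonoOn f (Set.Icc 0 1)) :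
    ∃ ℓ : ℝ → ℝ,
      (∀ z ∈ Set.Ioo d 1,
        Tendsto (fun L => f^[L] z / a ^ L) atTop (nhds (ℓ z)) ∧ 0 ≤ ℓ z) ∧
      (∃ Cb : ℝ, ∀ z ∈ Set.Ioo d 1,
        (1 - z) ^ (-Real.log a / Real.log b) * ℓ z ≤ Cb) ∧
      (∃ ε > (0 : ℝ), ∃ δ > (0 : ℝ), ∀ z ∈ Set.Ioo (1 - ε) 1,
        δ ≤ (1 - z) ^ (-Real.log a / Real.log b) * ℓ z) := by
  have hgd := hg d ⟨hd0.le, hd1.le⟩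
  have hmem1 : ∀ z ∈ Icc 0 d, z ∈ Icc (0 : ℝ) 1 := fun z hz => ⟨hz.1, hz.2.trans hd1.le⟩
  have hlow : ∀ x ∈ Icc 0 d, a * x ≤ f x := fun x hx => by
    rw [hf1 x hx, ← hco1]
    exact linear_term_le_of_hasSum hco hx.1 (hg x (hmem1 x hx))
  have hquad : ∀ x ∈ Icc 0 d, f x ≤ a * x + (g 1 - a) * x ^ 2 := fun x hx => by
    rw [hf1 x hx, ← hco1]
    exact le_linear_add_quadratic_of_hasSum hco hco0 hg (hmem1 x hx)
  have hcontr : ∀ x ∈ Icc 0 d, f x ≤ g d / d * x := fun x hx => by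
    rw [hf1 x hx]
    exact le_chord_of_hasSum hco hco0 hd0 hgd (hg x (hmem1 x hx)) hx
  have hK : 0 ≤ g 1 - a := by
    have := linear_term_le_of_hasSum hco zero_le_one (hg 1 (by simp))
    linarith
  have hdd : d ∈ Icc 0 d := ⟨hd0.le, le_rfl⟩
  have had : 0 < a * d := mul_pos ha hd0
  have hq0 : 0 ≤ g d / d := by
    have := hlow d hdd
    rw [hf1 d hdd] at this
    exact div_nonneg (had.le.trans this) hd0.le
  have hq1 : g d / d < 1 := (div_lt_one hd0).2 (hglt d ⟨hd0, le_rfl⟩)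
  set β := -Real.log a / Real.log b
  have hβ0 : 0 ≤ β :=
    div_nonneg (neg_nonneg.2 (Real.log_nonpos ha.le ha1.le)) (Real.log_pos hb).le
  set M := Real.exp ((g 1 - a) / a * (1 - g d / d)⁻¹)
  have key : ∀ z ∈ Ioo d 1, ∃ l, Tendsto (fun L => f^[L] z / a ^ L) atTop (nhds l) ∧ 0 ≤ l ∧
      (1 - z) ^ β * l ≤ d * M ∧ (1 - d) ^ β * (a * d) ≤ (1 - z) ^ β * l := by
    intro z hz
    obtain ⟨n, hy, hwd, hw⟩ := exists_iterate_escape hb hf2 hz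
    have hwlow : a * d ≤ f^[n + 1] z := by
      rw [Function.iterate_succ_apply']
      exact (hlow d hdd).trans
        (hmono ⟨hd0.le, hd1.le⟩ ⟨hd0.le.trans hy.1.le, hy.2⟩ hy.1).le
    obtain ⟨l, hl, hle, hlM⟩ := exists_tendsto_iterate_div_pow ha hK hq0 hq1 hd1.le hlow hquad
      hcontr ⟨had.le.trans hwlow, hwd⟩
    have hscale : (1 - z) ^ β = (1 - f^[n + 1] z) ^ β * a ^ (n + 1) := by
      rw [hw, pow_mul_rpow_neg_log_div_log ha hb (sub_nonneg.2 hz.2.le),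
        div_mul_cancel₀ _ (pow_pos ha _).ne']
    have heq : (1 - z) ^ β * (l / a ^ (n + 1)) = (1 - f^[n + 1] z) ^ β * l := by
      rw [hscale]
      field_simp
    have hl0 : 0 ≤ l := by linarith
    refine ⟨l / a ^ (n + 1), ?_, by positivity, ?_, ?_⟩
    · rw [← tendsto_add_atTop_iff_nat (n + 1)]
      refine (hl.div_const (a ^ (n + 1))).congr fun L => ?_
      rw [Function.iterate_add_apply f L (n + 1), pow_add a L (n + 1), div_div]
    · rw [heq]
      have h1 : (1 - f^[n + 1] z) ^ β ≤ 1 :=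
        Real.rpow_le_one (by linarith) (by linarith) hβ0
      exact (mul_le_of_le_one_left hl0 h1).trans
        (hlM.trans (mul_le_mul_of_nonneg_right hwd (Real.exp_pos _).le))
    · rw [heq]
      exact mul_le_mul (Real.rpow_le_rpow (by linarith) (by linarith) hβ0) (hwlow.trans hle)
        had.le (Real.rpow_nonneg (by linarith) _)
  choose! ℓ hℓ using key
  refine ⟨ℓ, fun z hz => ⟨(hℓ z hz).1, (hℓ z hz).2.1⟩, ⟨d * M, fun z hz => (hℓ z hz).2.2.1⟩,
    1 - d, sub_pos.2 hd1, (1 - d) ^ β * (a * d),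
    mul_pos (Real.rpow_pos_of_pos (sub_pos.2 hd1) _) had, fun z hz => (hℓ z ?_).2.2.2⟩
  simpa using hz
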